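/- Let Γ be a subgroup of the cyclic group generated by the cyclic shift (1,…,n), and let I_0, I_1 ⊆ [n] be disjoint with I_0 ∪ I_1 ⊊ [n], defining a complete set of fixings for every permutation in Γ. If { x ∈ F(I_0, I_1) : x ⪰ γ(x) for all γ ∈ Γ } is nonempty, then there exists x ∈ F(I_0, I_1) such that x ≻ γ(x) (strictly) for all γ ∈ Γ with γ ≠ id. -/

import Mathlib

/-- Strict lexicographic order on binary vectors: at the first differing index, `x` has 1. -/
def lexGt {n : ℕ} (x y : Fin n → Bool) : Prop :=
  ∃ j : Fin n, (∀ i : Fin n, i < j → x i = y i) ∧ y j < x j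

/-- Non-strict lexicographic order `x ⪰ y`. -/
def lexGe {n : ℕ} (x y : Fin n → Bool) : Prop :=
  x = y ∨ lexGt x y

/-- Coordinate-permuting action: `(γ • x) i = x (γ⁻¹ i)`. -/
def permAct {n : ℕ} (γ : Equiv.Perm (Fin n)) (x : Fin n → Bool) : Fin n → Bool :=
  fun i => x (γ⁻¹ i)

/-- `FF I0 I1` is the set of binary vectors fixed to 0 on `I0` and to 1 on `I1`. -/
def FF {n : ℕ} (I0 I1 : Finset (Fin n)) : Set (Fin n → Bool) :=
  {x | (∀ i ∈ I0, x i = false) ∧ ∀ i ∈ I1, x i = true}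

namespace LexAux

def GE (X : ℕ → Bool) (s : ℕ) : Prop :=
  ∀ j, (∀ a < j, X a = X (a + s)) → X (j + s) = true → X j = true

def GT (X : ℕ → Bool) (s : ℕ) : Prop :=
  ∃ j, (∀ a < j, X a = X (a + s)) ∧ X (j + s) = false ∧ X j = true

theorem geLemma {X : ℕ → Bool} {h r : ℕ} (hX : GE X h)
    (hb : ∀ b < r, X b = true → X (b + h) = true) (hr : X (r + h) = true) : X r = true := by
  have key : ∀ b, b < r → X b = X (b + h) := by
    intro b
    induction b using Nat.strong_induction_on with
    | _ b ih =>
      intro hbr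
      have h1 := hX b (fun a ha => ih a ha (by omega))
      have h2 := hb b hbr
      cases h3 : X b <;> cases h4 : X (b + h) <;> simp_all
  exact hX r key hr

/-- `Y` is lex-at-least its shift; `Z` is equal to `Y` below `m`, its shift is below that of `Y`. -/
theorem tieLemma {Y Z : ℕ → Bool} {s m : ℕ} (hY : GE Y s)
    (heq : ∀ a < m, Z a = Y a) (hle : ∀ a < m, Z (a + s) = true → Y (a + s) = true)
    (hn : ¬ GT Z s) : ∀ a < m, Y (a + s) = Y a ∧ Z (a + s) = Y a := by
  intro a
  induction a using Nat.strong_induction_on with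
  | _ a ih =>
    intro ham
    have h1 := hY a (fun b hb => ((ih b hb (by omega)).1).symm)
    have h2 := hle a ham
    have h3 := heq a ham
    have h4 : ¬ (Z (a + s) = false ∧ Z a = true) := by
      intro hh
      refine hn ⟨a, fun b hb => ?_, hh.1, hh.2⟩
      rw [(ih b hb (by omega)).2, heq b (by omega)]
    cases h5 : Y a <;> cases h6 : Y (a + s) <;> cases h7 : Z (a + s) <;> simp_all

theorem per_mul {X : ℕ → Bool} {p : ℕ} (h : ∀ a, X (a + p) = X a) (k a : ℕ) :
    X (a + p * k) = X a := by
  induction k with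
  | zero => simp
  | succ k ih => rw [Nat.mul_succ, ← Nat.add_assoc, h, ih]

theorem per_mod {X : ℕ → Bool} {p : ℕ} (h : ∀ a, X (a + p) = X a) (a : ℕ) :
    X (a % p) = X a := by
  conv_rhs => rw [← Nat.mod_add_div a p]
  rw [per_mul h]

/-- reduction of strictness to shifts in `(0,n)` -/
theorem gt_mod {X : ℕ → Bool} {n t : ℕ} (h : ∀ a, X (a + n) = X a) (hg : GT X (t % n)) :
    GT X t := by
  have e : ∀ a, X (a + t) = X (a + t % n) := by
    intro a
    conv_lhs => rw [← Nat.mod_add_div t n, ← Nat.add_assoc]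
    rw [per_mul h]
  obtain ⟨j, h1, h2, h3⟩ := hg
  exact ⟨j, fun a ha => by rw [e, h1 a ha], by rw [e, h2], h3⟩

theorem mod_mem {S : Set ℕ} {n : ℕ}
    (hsub : ∀ s ∈ S, ∀ t ∈ S, s ≤ t → t - s ∈ S) (hn : n ∈ S) (hn0 : 0 < n) :
    ∀ t ∈ S, t % n ∈ S := by
  intro t
  induction t using Nat.strong_induction_on with
  | _ t ih =>
    intro ht
    by_cases h : t < n
    · rwa [Nat.mod_eq_of_lt h]
    · rw [Nat.mod_eq_sub_mod (by omega)]
      exact ih (t - n) (by omega) (hsub n hn t ht (by omega))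

theorem mod_eq_of_near {n a i : ℕ} (hi : i < n) (h1 : i < a) (h2 : a < i + n) : a % n ≠ i := by
  intro h
  by_cases h3 : a < n
  · rw [Nat.mod_eq_of_lt h3] at h; omega
  · rw [Nat.mod_eq_sub_mod (by omega), Nat.mod_eq_of_lt (by omega)] at h; omega

/-- Lowering a free one in the last block. -/
theorem lowerLemma {n p : ℕ} {S : Set ℕ} {x : ℕ → Bool} (hp0 : 0 < p)
    (h2p : 2 * p ≤ n) (hpn : p ∣ n)
    (hxn : ∀ a, x (a + n) = x a) (hxp : ∀ a, x (a + p) = x a)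
    (hge : ∀ s ∈ S, GE x s)
    (hmin : ∀ s ∈ S, (∀ a, x (a + s) = x a) → p ∣ s)
    {i : ℕ} (hi1 : n - p ≤ i) (hi2 : i < n) (hi : x i = true)
    {t : ℕ} (ht : t ∈ S) (ht0 : 0 < t) (htn : t < n) :
    GT (fun a => if a % n = i then false else x a) t := by
  set z : ℕ → Bool := fun a => if a % n = i then false else x a with hz
  have hzx : ∀ a, z a = true → x a = true := by
    intro a; simp only [hz]; split_ifs <;> simp
  have hzlt : ∀ a, a < i → z a = x a := by
    intro a ha
    simp only [hz]
    rw [if_neg]; rw [Nat.mod_eq_of_lt (by omega)]; omega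
  by_cases hpt : p ∣ t
  · have hxt : ∀ a, x (a + t) = x a := by
      obtain ⟨k, rfl⟩ := hpt; exact per_mul hxp k
    have htle : t ≤ n - p := by
      obtain ⟨k, rfl⟩ := hpt
      obtain ⟨l, rfl⟩ := hpn
      have : k < l := by
        by_contra hh
        have := Nat.mul_le_mul_left p (not_lt.mp hh); omega
      have := Nat.mul_le_mul_left p (Nat.succ_le_of_lt this)
      rw [Nat.mul_succ] at this; omega
    refine ⟨i - t, fun a ha => ?_, ?_, ?_⟩
    · rw [hzlt a (by omega), hzlt (a + t) (by omega), hxt]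
    · rw [Nat.sub_add_cancel (by omega)]
      simp [hz, Nat.mod_eq_of_lt hi2]
    · rw [hzlt _ (by omega), ← hxt, Nat.sub_add_cancel (by omega), hi]
  · by_contra hn
    have hall := tieLemma (m := i) (hge t ht) hzlt (fun a _ => hzx _) hn
    apply hpt
    apply hmin t ht
    intro a
    have h1 := (hall (a % p) (by have := Nat.mod_lt a hp0; omega)).1
    rw [per_mod hxp] at h1
    rw [← h1]
    conv_lhs => rw [← Nat.mod_add_div a p, Nat.add_right_comm]
    rw [per_mul hxp]

theorem bool_iter {f : ℕ → Bool} {s p : ℕ} (hs : 0 < s) (hf : ∀ a, f (a + s) = f a)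
    (h : ∀ a, f (a + p) = true → f a = true) (a : ℕ) (ha : f a = true) : f (a + p) = true := by
  have key : ∀ k b, f (b + p * k) = true → f b = true := by
    intro k
    induction k with
    | zero => intro b; simp
    | succ k ih =>
      intro b hb
      rw [Nat.mul_succ, ← Nat.add_assoc] at hb
      exact ih b (h _ hb)
  apply key (s - 1)
  have : a + p + p * (s - 1) = a + s * p := by
    obtain ⟨r, rfl⟩ : ∃ r, s = r + 1 := ⟨s - 1, by omega⟩
    simp; ring
  rw [this, per_mul hf, ha]

set_option maxHeartbeats 1000000 in
theorem core {n : ℕ} (hn0 : 0 < n) {S : Set ℕ} (hnS : n ∈ S)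
    (hadd : ∀ s ∈ S, ∀ t ∈ S, s + t ∈ S)
    (hsub : ∀ s ∈ S, ∀ t ∈ S, s ≤ t → t - s ∈ S)
    (free : ℕ → Prop) (hfree : ∃ i < n, free i)
    (hfn : ∀ a, free (a % n) ↔ free a)
    (x : ℕ → Bool) (hxn : ∀ a, x (a + n) = x a)
    (hge : ∀ s ∈ S, GE x s)
    (hcomp : ∀ s ∈ S, ∀ i < n, free i → ∀ b : Bool, ∃ y : ℕ → Bool,
      (∀ a, y (a + n) = y a) ∧ (∀ a, ¬ free a → y a = x a) ∧ GE y s ∧ y i = b) :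
    ∃ z : ℕ → Bool, (∀ a, z (a + n) = z a) ∧ (∀ a, ¬ free a → z a = x a) ∧
      ∀ s ∈ S, ¬ n ∣ s → GT z s := by
  classical
  by_contra hcon
  have hmodn := mod_mem hsub hnS hn0
  have h0S : 0 ∈ S := by simpa using hsub n hnS n hnS le_rfl
  have hmulS : ∀ s ∈ S, ∀ k, s * k ∈ S := by
    intro s hs k
    induction k with
    | zero => simpa using h0S
    | succ k ih => rw [Nat.mul_succ]; exact hadd _ ih _ hs
  -- a reduced form of the goal
  have hred : ∀ z : ℕ → Bool, (∀ a, z (a + n) = z a) → (∀ a, ¬ free a → z a = x a) →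
      ∃ t ∈ S, 0 < t ∧ t < n ∧ ¬ GT z t := by
    intro z h1 h2
    by_contra hh
    push Not at hh
    refine hcon ⟨z, h1, h2, fun s hs hns => gt_mod h1 (hh _ (hmodn s hs) ?_ (Nat.mod_lt _ hn0))⟩
    exact Nat.pos_of_ne_zero fun h => hns (Nat.dvd_of_mod_eq_zero h)
  -- period of x
  have hper : ∃ p, p ∈ S ∧ 0 < p ∧ ∀ a, x (a + p) = x a := ⟨n, hnS, hn0, hxn⟩
  obtain ⟨hpS, hp0, hxp⟩ := Nat.find_spec hper
  have hpmin : ∀ q, q ∈ S → 0 < q → (∀ a, x (a + q) = x a) → Nat.find hper ≤ q :=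
    fun q h1 h2 h3 => Nat.find_min' hper ⟨h1, h2, h3⟩
  generalize Nat.find hper = p at hpS hp0 hxp hpmin
  have hmin : ∀ s ∈ S, (∀ a, x (a + s) = x a) → p ∣ s := by
    intro s hs hxs
    by_contra hd
    have hpos : 0 < s % p := Nat.pos_of_ne_zero fun h => hd (Nat.dvd_of_mod_eq_zero h)
    have := hpmin (s % p) (mod_mem hsub hpS hp0 s hs) hpos (by
      intro a
      rw [← hxs a]
      conv_rhs => rw [← Nat.mod_add_div s p, ← Nat.add_assoc]
      rw [per_mul hxp])
    have := Nat.mod_lt s hp0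
    omega
  have hpn : p ∣ n := hmin n hnS hxn
  have h2p : 2 * p ≤ n := by
    obtain ⟨t, htS, ht0, htn, hng⟩ := hred x hxn (fun _ _ => rfl)
    have hxt : ∀ a, x (a + t) = x a := fun a =>
      (tieLemma (m := a + 1) (hge t htS) (fun _ _ => rfl) (fun _ _ h => h) hng a (by omega)).1
    have hpt := Nat.le_of_dvd ht0 (hmin t htS hxt)
    obtain ⟨k, rfl⟩ := hpn
    have : 2 ≤ k := by
      by_contra hk
      have : p * k ≤ p * 1 := Nat.mul_le_mul_left p (by omega)
      omega
    rw [Nat.mul_comm]; exact Nat.mul_le_mul_left p this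
  -- free entries in the last block are zero
  have hlast : ∀ i, n - p ≤ i → i < n → free i → x i = false := by
    intro i h1 h2 hf
    by_contra hx
    have hx : x i = true := by simpa using hx
    obtain ⟨t, htS, ht0, htn, hng⟩ := hred (fun a => if a % n = i then false else x a)
      (by intro a; simp [hxn]) (by
        intro a ha
        rw [if_neg]
        rintro rfl
        exact ha ((hfn a).1 hf))
    exact hng (lowerLemma hp0 h2p hpn hxn hxp hge hmin h1 h2 hx htS ht0 htn)
  -- first free index
  obtain ⟨hin, hif⟩ := Nat.find_spec hfree
  have himin : ∀ a, a < Nat.find hfree → ¬ free a := fun a ha hf =>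
    Nat.find_min hfree ha ⟨by omega, hf⟩
  generalize Nat.find hfree = i at hin hif himin
  have hxi : x i = false := by
    by_contra hx
    have hx : x i = true := by simpa using hx
    obtain ⟨y, hyn, hyx, hyge, hyi⟩ := hcomp (n - p) (hsub p hpS n hnS (by omega)) i hin hif false
    have hsh : ∀ a, a ≤ i → x a = true → y (a + (n - p)) = true := by
      intro a ha hxa
      by_cases hap : a < p
      · have hxa' : x (a + (n - p)) = true := by
          rw [← hxp, show a + (n - p) + p = a + n by omega, hxn, hxa]
        by_cases hf : free (a + (n - p))
        · rw [hlast _ (by omega) (by omega) hf] at hxa'; simp at hxa'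
        · rw [hyx _ hf, hxa']
      · rw [show a + (n - p) = (a - p) + n by omega, hyn, hyx _ (himin _ (by omega)), ← hxp,
          Nat.sub_add_cancel (by omega), hxa]
    have := geLemma hyge (r := i) (fun b hb h => hsh b hb.le (by rwa [hyx _ (himin _ hb)] at h))
      (hsh i le_rfl hx)
    rw [hyi] at this; simp at this
  have hip : i < p := by
    by_contra hle
    obtain ⟨y, hyn, hyx, hyge, hyi⟩ := hcomp (p * (i / p)) (hmulS p hpS _) i hin hif true
    have e := Nat.mod_add_div i p
    have hlt := Nat.mod_lt i hp0
    have := geLemma hyge (r := i % p) (fun b hb h => by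
        rw [hyx _ (himin _ (by omega))] at h
        rw [hyx _ (himin _ (by omega)), per_mul hxp, h]) (by rw [e, hyi])
    rw [hyx _ (himin _ (by omega)), per_mod hxp, hxi] at this
    simp at this
  -- the candidate
  set z : ℕ → Bool := fun a => if free a then decide (a % n = i) else x a with hz
  have hzn : ∀ a, z (a + n) = z a := by
    intro a
    have : free (a + n) ↔ free a := by rw [← hfn, Nat.add_mod_right, hfn]
    simp [hz, this, hxn]
  have hzx : ∀ a, ¬ free a → z a = x a := fun a ha => by simp [hz, ha]
  have hzlt : ∀ a, a < i → z a = x a := fun a ha => hzx a (himin a ha)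
  have hzi : z i = true := by simp [hz, hif, Nat.mod_eq_of_lt hin]
  have hzle : ∀ a, i < a → a < i + n → z a = true → x a = true := by
    intro a h1 h2 h3
    have := mod_eq_of_near hin h1 h2
    by_cases hf : free a
    · simp [hz, hf, this] at h3
    · rwa [hzx a hf] at h3
  obtain ⟨s, hsS, hs0, hsn, hng⟩ := hred z hzn hzx
  by_cases hsi : i < s
  · have htie := tieLemma (m := i) (hge s hsS) hzlt
      (fun a ha => hzle (a + s) (by omega) (by omega)) hng
    apply hng
    refine ⟨i, fun a ha => by rw [(htie a ha).2, hzlt a ha], ?_, hzi⟩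
    by_contra hh
    have hh : z (i + s) = true := by simpa using hh
    have := hge s hsS i (fun a ha => ((htie a ha).1).symm)
      (hzle (i + s) (by omega) (by omega) hh)
    rw [hxi] at this; simp at this
  push Not at hsi
  -- step 1
  have hstep1 : ∀ a, a ≤ i → z (a + s) = z a := by
    obtain ⟨y, hyn, hyx, hyge, hyi⟩ := hcomp s hsS i hin hif true
    have hzy : ∀ a, z a = true → y a = true := by
      intro a ha
      by_cases hf : free a
      · have : a % n = i := by simpa [hz, hf] using ha
        rw [← per_mod hyn, this, hyi]
      · rw [hyx a hf, ← hzx a hf, ha]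
    have heq : ∀ a < i + 1, z a = y a := by
      intro a ha
      rcases Nat.lt_or_ge a i with h | h
      · rw [hzlt a h, hyx a (himin a h)]
      · obtain rfl : a = i := by omega
        rw [hzi, hyi]
    have htie := tieLemma hyge heq (fun a _ => hzy _) hng
    intro a ha
    rw [(htie a (by omega)).2, heq a (by omega)]
  -- step 2
  have hstep2 : ∃ a, z (a + s) ≠ z a ∧ a + s ≤ p + i := by
    by_contra hh
    push Not at hh
    have hmod : ∀ a, a ≤ p + i → z (a % s) = z a := by
      intro a
      induction a using Nat.strong_induction_on with
      | _ a ih =>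
        intro ha
        by_cases h : a < s
        · rw [Nat.mod_eq_of_lt h]
        · rw [Nat.mod_eq_sub_mod (by omega), ih (a - s) (by omega) (by omega)]
          by_contra h5
          have h6 := hh (a - s) (by rw [Nat.sub_add_cancel (by omega)]; exact Ne.symm h5)
          omega
    have hxz : ∀ a, a ≤ i → z (a + p) = true → x a = true := by
      intro a ha h
      rw [← hxp]
      exact hzle _ (by omega) (by omega) h
    have hfp : ∀ a, z ((a + p) % s) = true → z (a % s) = true := by
      intro a ha
      have hlt := Nat.mod_lt a hs0
      rw [← Nat.mod_add_mod, hmod _ (by omega)] at ha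
      rw [hzlt _ (by omega)]
      exact hxz _ (by omega) ha
    have := bool_iter (f := fun a => z (a % s)) hs0 (by intro a; simp) hfp i
      (by rw [hmod i (by omega), hzi])
    rw [hmod _ (by omega)] at this
    have := hxz i le_rfl this
    rw [hxi] at this; simp at this
  -- step 3
  have hmis : ∃ a, z (a + s) ≠ z a := by
    obtain ⟨a, h, _⟩ := hstep2; exact ⟨a, h⟩
  have hspec := Nat.find_spec hmis
  have hbelow : ∀ a < Nat.find hmis, z (a + s) = z a := fun a ha => by
    have := Nat.find_min hmis ha
    simpa using this
  have hbd : Nat.find hmis + s ≤ p + i := by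
    obtain ⟨a, h, h'⟩ := hstep2
    have := Nat.find_min' hmis h
    omega
  generalize Nat.find hmis = e at hspec hbelow hbd
  have hie : i < e := by
    by_contra h
    exact hspec (hstep1 e (by omega))
  have hes : z (e + s) = true ∧ z e = false := by
    have : ¬ (z (e + s) = false ∧ z e = true) := fun hh =>
      hng ⟨e, fun a ha => (hbelow a ha).symm, hh.1, hh.2⟩
    clear_value z
    generalize z (e + s) = u at *
    generalize z e = v at *
    revert hspec this
    cases u <;> cases v <;> simp
  have hmulp : ∀ k b, b + s * k < e + s → z (b + s * k) = z b := by
    intro k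
    induction k with
    | zero => intro b _; simp
    | succ k ih =>
      intro b hb
      rw [Nat.mul_succ] at hb ⊢
      rw [← Nat.add_assoc, hbelow _ (by omega), ih b (by omega)]
  have hdm := Nat.mod_add_div i s
  have hml := Nat.mod_lt i hs0
  obtain ⟨k, hk⟩ : ∃ k, k = i / s := ⟨_, rfl⟩
  rw [← hk] at hdm
  have hh : s * (k + 1) = s * k + s := Nat.mul_succ s k
  have hgeh := hge (s * (k + 1)) (hmulS s hsS _)
  -- m = e - s*k
  have hm1 : z (e - s * k) = false := by
    rw [← hmulp k (e - s * k) (by omega), Nat.sub_add_cancel (by omega), hes.2]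
  have hm2 : z (e - s * k + s * (k + 1)) = true := by
    rw [hh, show e - s * k + (s * k + s) = e + s by omega, hes.1]
  have hle : ∀ b, b < i → b < e - s * k → x b = true → x (b + s * (k + 1)) = true := by
    intro b hb1 hb2 hxb
    apply hzle _ (by omega) (by omega)
    rw [hmulp _ _ (by omega), hzlt b hb1, hxb]
  rcases lt_trichotomy (e - s * k) i with hlt | heq | hgt
  · have := geLemma hgeh (r := e - s * k) (fun b hb => hle b (by omega) hb)
      (hzle _ (by omega) (by omega) hm2)
    rw [← hzlt _ hlt, hm1] at this; simp at this
  · rw [heq, hzi] at hm1; simp at hm1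
  · have := geLemma hgeh (r := i) (fun b hb => hle b hb (by omega))
      (hzle _ (by omega) (by omega) (by rw [hmulp _ _ (by omega), hzi]))
    rw [hxi] at this; simp at this

theorem rot_val (m s : ℕ) (i : Fin (m + 1)) :
    (((finRotate (m + 1)) ^ s) i).val = (i.val + s) % (m + 1) := by
  induction s with
  | zero => simp [Nat.mod_eq_of_lt i.isLt]
  | succ s ih =>
    rw [pow_succ', Equiv.Perm.mul_apply, finRotate_apply, Fin.val_add, ih]
    simp [Nat.add_assoc]

def lift {m : ℕ} (x : Fin (m + 1) → Bool) : ℕ → Bool :=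
  fun a => x ⟨a % (m + 1), Nat.mod_lt _ (Nat.succ_pos m)⟩

theorem lift_per {m : ℕ} (x : Fin (m + 1) → Bool) (a : ℕ) :
    lift x (a + (m + 1)) = lift x a := by simp [lift]

theorem lift_val {m : ℕ} (x : Fin (m + 1) → Bool) (i : Fin (m + 1)) : lift x i.val = x i := by
  simp [lift, Nat.mod_eq_of_lt i.isLt]

theorem act_val {m : ℕ} (x : Fin (m + 1) → Bool) (s : ℕ) (i : Fin (m + 1)) :
    permAct ((finRotate (m + 1)) ^ s)⁻¹ x i = lift x (i.val + s) := by
  simp only [permAct, inv_inv, lift]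
  congr 1
  exact Fin.ext (rot_val m s i)

theorem ge_lift {m : ℕ} (x : Fin (m + 1) → Bool) (s : ℕ)
    (h : lexGe x (permAct ((finRotate (m + 1)) ^ s)⁻¹ x)) : GE (lift x) s := by
  intro j hj hjs
  rcases h with h | ⟨k, hk1, hk2⟩
  · have := congrFun h ⟨j % (m + 1), Nat.mod_lt _ (Nat.succ_pos m)⟩
    rw [act_val] at this
    simp only [lift, Nat.mod_add_mod] at this hjs ⊢
    rw [this, hjs]
  · rw [act_val, ← lift_val x k] at hk2
    rcases lt_trichotomy j k.val with hlt | heq | hgt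
    · have := hk1 ⟨j, by omega⟩ hlt
      rw [act_val, ← lift_val x] at this
      rw [this, hjs]
    · rw [← heq, hjs] at hk2
      revert hk2; cases lift x j <;> simp
    · rw [hj k.val hgt] at hk2
      exact absurd hk2 (lt_irrefl _)

theorem gt_lift {m : ℕ} (x : Fin (m + 1) → Bool) (s : ℕ)
    (h : GT (lift x) s) : lexGt x (permAct ((finRotate (m + 1)) ^ s)⁻¹ x) := by
  obtain ⟨j, h1, h2, h3⟩ := h
  have hj : j < m + 1 := by
    by_contra hge
    have := h1 (j - (m + 1)) (by omega)
    rw [← lift_per, ← lift_per x (j - (m + 1) + s),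
      show j - (m + 1) + s + (m + 1) = j + s by omega, Nat.sub_add_cancel (by omega), h2, h3] at this
    simp at this
  refine ⟨⟨j, hj⟩, fun i hi => ?_, ?_⟩
  · rw [act_val, ← lift_val x i]
    exact h1 i.val hi
  · rw [act_val, ← lift_val x ⟨j, hj⟩]
    simp only
    rw [h2, h3]; decide

end LexAux

open LexAux in
theorem strict_lexmax_exists (n : ℕ)
    (Γ : Subgroup (Equiv.Perm (Fin n)))
    (hΓ : Γ ≤ Subgroup.zpowers (finRotate n))
    (I0 I1 : Finset (Fin n)) (hdis : Disjoint I0 I1)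
    (hproper : ∃ i : Fin n, i ∉ I0 ∪ I1)
    (hcomp : ∀ γ ∈ Γ, ∀ i : Fin n, i ∉ I0 ∪ I1 → ∀ b : Bool,
      ∃ x ∈ FF I0 I1, lexGe x (permAct γ x) ∧ x i = b)
    (hne : ∃ x ∈ FF I0 I1, ∀ γ ∈ Γ, lexGe x (permAct γ x)) :
    ∃ x ∈ FF I0 I1, ∀ γ ∈ Γ, γ ≠ 1 → lexGt x (permAct γ x) := by
  obtain ⟨i0, hi0⟩ := hproper
  obtain ⟨m, rfl⟩ : ∃ m, n = m + 1 := ⟨n - 1, by have := i0.isLt; omega⟩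
  obtain ⟨x, hxF, hx⟩ := hne
  have hrotn : ∀ s, (m + 1) ∣ s → (finRotate (m + 1)) ^ s = 1 := by
    intro s hs
    ext i
    rw [rot_val]
    obtain ⟨k, rfl⟩ := hs
    simp [Nat.mod_eq_of_lt i.isLt]
  have hagree : ∀ y ∈ FF I0 I1, ∀ j, j ∉ {j | j ∉ I0 ∪ I1} → y j = x j := by
    intro y hy j hj
    simp only [Set.mem_ofPred_eq, not_not, Finset.mem_union] at hj
    rcases hj with hj | hj
    · rw [hy.1 j hj, hxF.1 j hj]
    · rw [hy.2 j hj, hxF.2 j hj]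
  obtain ⟨z, hzn, hzx, hz⟩ := core (n := m + 1) (Nat.succ_pos m)
    (S := {s | (finRotate (m + 1)) ^ s ∈ Γ})
    (by simp only [Set.mem_ofPred_eq]; rw [hrotn _ dvd_rfl]; exact Γ.one_mem)
    (by intro s hs t ht; simp only [Set.mem_ofPred_eq] at *; rw [pow_add]; exact Γ.mul_mem hs ht)
    (by
      intro s hs t ht hst
      simp only [Set.mem_ofPred_eq] at *
      rw [pow_sub _ hst]; exact Γ.mul_mem ht (Γ.inv_mem hs))
    (fun a => (⟨a % (m + 1), Nat.mod_lt _ (Nat.succ_pos m)⟩ : Fin (m + 1)) ∉ I0 ∪ I1)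
    ⟨i0.val, i0.isLt, by simpa only [Nat.mod_eq_of_lt i0.isLt] using hi0⟩
    (by intro a; simp only [Nat.mod_mod])
    (lift x) (lift_per x)
    (fun s hs => ge_lift x s (hx _ (Γ.inv_mem hs)))
    (by
      intro s hs i hi hf b
      obtain ⟨y, hyF, hy, hyb⟩ := hcomp _ (Γ.inv_mem hs) _ hf b
      exact ⟨lift y, lift_per y, fun a ha => hagree y hyF _ ha, ge_lift y s hy, hyb⟩)
  have hlz : lift (fun i : Fin (m + 1) => z i.val) = z := by
    funext a
    simp only [lift]
    exact per_mod hzn a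
  have hzx' : ∀ i : Fin (m + 1), i ∈ I0 ∪ I1 → z i.val = x i := by
    intro i hi
    rw [hzx i.val (by simpa only [Nat.mod_eq_of_lt i.isLt, not_not] using hi), lift_val]
  refine ⟨fun i => z i.val, ⟨fun i hi => ?_, fun i hi => ?_⟩, fun γ hγ hγ1 => ?_⟩
  · exact (hzx' i (Finset.mem_union_left _ hi)).trans (hxF.1 i hi)
  · exact (hzx' i (Finset.mem_union_right _ hi)).trans (hxF.2 i hi)
  · obtain ⟨s, hs⟩ : ∃ s : ℕ, (finRotate (m + 1)) ^ s = γ⁻¹ := by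
      have h1 := hΓ (Γ.inv_mem hγ)
      rw [← mem_powers_iff_mem_zpowers] at h1
      exact h1
    have hg : γ = ((finRotate (m + 1)) ^ s)⁻¹ := by rw [hs, inv_inv]
    rw [hg]
    apply gt_lift
    rw [hlz]
    apply hz s
    · simp only [Set.mem_ofPred_eq]; rw [hs]; exact Γ.inv_mem hγ
    · intro hd
      apply hγ1
      rw [hg, hrotn s hd, inv_one]
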